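/- Let p ∈ ℝ[x], let σ0 ∈ QM(c_in), and set h = p − σ0. Assume there exist an integer k1 ≥ 1 and σ1 ∈ Σ[x] such that h^{2k1} + σ1 ∈ Ideal(c_eq). Then there exists k0 ∈ ℕ such that for every real ε > 0, p + ε ∈ Ideal(c_eq)_{2k0} + QM(c_in)_{2k0}. -/

import Mathlib

open MvPolynomial MeasureTheory

noncomputable section

/-- The space of real polynomials in `n` variables. -/
abbrev RPoly (n : ℕ) : Type := MvPolynomial (Fin n) ℝ

/-- The degree `|α|` of a monomial power `α`. -/
def mdeg {n : ℕ} (α : Fin n →₀ ℕ) : ℕ := ∑ i, α i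

/-- `p` is a sum of squares of polynomials. -/
def IsSOS {n : ℕ} (p : RPoly n) : Prop :=
  ∃ L : List (RPoly n), p = (L.map (fun q => q ^ 2)).sum

/-- The truncation `QM(g)_k` of the quadratic module generated by `(g j)_{j ∈ S}`. -/
def QModDeg {n : ℕ} {κ : Type} (S : Finset κ) (g : κ → RPoly n) (k : ℕ) :
    Set (RPoly n) :=
  {p | ∃ σ0 : RPoly n, ∃ σ : κ → RPoly n,
      IsSOS σ0 ∧ σ0.totalDegree ≤ k ∧
      (∀ j ∈ S, IsSOS (σ j) ∧ (σ j).totalDegree + (g j).totalDegree ≤ k) ∧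
      p = σ0 + ∑ j ∈ S, g j * σ j}

/-- The truncation `Ideal(h)_k` of the ideal generated by `(h j)_{j ∈ S}`. -/
def IdealDeg {n : ℕ} {ι : Type} (S : Finset ι) (h : ι → RPoly n) (k : ℕ) :
    Set (RPoly n) :=
  {p | ∃ q : ι → RPoly n,
      (∀ j ∈ S, (q j).totalDegree + (h j).totalDegree ≤ k) ∧
      p = ∑ j ∈ S, h j * q j}

/-- The quadratic module `QM(g)` generated by `(g j)_{j ∈ S}`. -/
def QModFull {n : ℕ} {κ : Type} (S : Finset κ) (g : κ → RPoly n) : Set (RPoly n) :=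
  {p | ∃ σ0 : RPoly n, ∃ σ : κ → RPoly n,
      IsSOS σ0 ∧ (∀ j ∈ S, IsSOS (σ j)) ∧ p = σ0 + ∑ j ∈ S, g j * σ j}

/-- The ideal `Ideal(h)` generated by `(h j)_{j ∈ S}`. -/
def IdealFull {n : ℕ} {ι : Type} (S : Finset ι) (h : ι → RPoly n) : Set (RPoly n) :=
  (Ideal.span (h '' (S : Set ι)) : Ideal (RPoly n))

/-- `Ideal(c_eq) + QM(c_in)` is archimedean. -/
def ArchimedeanQM {n : ℕ} (E I : Finset ℕ) (c : ℕ → RPoly n) : Prop :=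
  ∃ R : ℝ, 0 < R ∧ ∃ p1 ∈ IdealFull E c, ∃ p2 ∈ QModFull I c,
    (C R : RPoly n) - ∑ i, (X i : RPoly n) ^ 2 = p1 + p2

/-- The basic closed semialgebraic set `K`. -/
def Kset {n : ℕ} (E I : Finset ℕ) (c : ℕ → RPoly n) : Set (Fin n → ℝ) :=
  {x | (∀ j ∈ E, eval x (c j) = 0) ∧ (∀ j ∈ I, 0 ≤ eval x (c j))}

/-- The bilinear pairing `⟨p, y⟩ = ∑_α p_α y_α`. -/
def pairing {n : ℕ} (p : RPoly n) (y : (Fin n →₀ ℕ) → ℝ) : ℝ :=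
  ∑ α ∈ p.support, p.coeff α * y α

/-- Membership in the moment cone `ℛ_d(K)`: the entries `y_α`, `|α| ≤ d`, are the
moments of a finite Borel measure supported in the closed set `K`. -/
def InMomentCone {n : ℕ} (d : ℕ) (K : Set (Fin n → ℝ)) (y : (Fin n →₀ ℕ) → ℝ) : Prop :=
  ∃ μ : Measure (Fin n → ℝ), IsFiniteMeasure μ ∧ μ Kᶜ = 0 ∧
    ∀ α : Fin n →₀ ℕ, mdeg α ≤ d →
      Integrable (fun x => ∏ i, x i ^ α i) μ ∧
      y α = ∫ x, (∏ i, x i ^ α i) ∂μ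

/-- The cone `P_d(K)` of polynomials of degree at most `d` that are nonnegative on `K`. -/
def PdCone {n : ℕ} (d : ℕ) (K : Set (Fin n → ℝ)) : Set (RPoly n) :=
  {p | p.totalDegree ≤ d ∧ ∀ x ∈ K, 0 ≤ eval x p}

/-- The interior of `P_d(K)` in the coefficient topology of `ℝ[x]_d`. -/
def PdInterior {n : ℕ} (d : ℕ) (K : Set (Fin n → ℝ)) : Set (RPoly n) :=
  {p | p.totalDegree ≤ d ∧ ∃ ε : ℝ, 0 < ε ∧ ∀ q : RPoly n, q.totalDegree ≤ d →
      (∀ α : Fin n →₀ ℕ, |q.coeff α - p.coeff α| ≤ ε) → ∀ x ∈ K, 0 ≤ eval x q}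

instance degLEFintype (n t : ℕ) : Fintype {α : Fin n →₀ ℕ // mdeg α ≤ t} := by
  apply Fintype.ofInjective
    (fun a : {α : Fin n →₀ ℕ // mdeg α ≤ t} =>
      (fun i => (⟨a.1 i, by
        have h1 : a.1 i ≤ mdeg a.1 :=
          Finset.single_le_sum (fun j _ => Nat.zero_le _) (Finset.mem_univ i)
        exact Nat.lt_succ_of_le (le_trans h1 a.2)⟩ : Fin (t + 1))) :
        {α : Fin n →₀ ℕ // mdeg α ≤ t} → (Fin n → Fin (t + 1)))
  intro a b hab
  apply Subtype.ext
  ext i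
  exact congrArg Fin.val (congrFun hab i)

/-- The moment matrix `M_t[w]`, indexed by monomial powers of degree at most `t`. -/
def momentMatrix {n : ℕ} (t : ℕ) (w : (Fin n →₀ ℕ) → ℝ) :
    Matrix {α : Fin n →₀ ℕ // mdeg α ≤ t} {α : Fin n →₀ ℕ // mdeg α ≤ t} ℝ :=
  fun α β => w (α.1 + β.1)

/-- `w` admits a flat truncation: for some `d0 ≤ t ≤ k`,
`rank M_{t-dK}[w] = rank M_t[w]`. -/
def HasFlatTruncation {n : ℕ} (d0 dK k : ℕ) (w : (Fin n →₀ ℕ) → ℝ) : Prop :=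
  ∃ t : ℕ, d0 ≤ t ∧ t ≤ k ∧
    (momentMatrix (t - dK) w).rank = (momentMatrix t w).rank

/-- The gradient of a polynomial at a point. -/
def gradP {n : ℕ} (p : RPoly n) (u : Fin n → ℝ) : Fin n → ℝ :=
  fun i => eval u (pderiv i p)

/-- The Hessian of a polynomial at a point. -/
def hessP {n : ℕ} (p : RPoly n) (u : Fin n → ℝ) : Fin n → Fin n → ℝ :=
  fun i j => eval u (pderiv i (pderiv j p))

/-- The classical optimality conditions (LICQC, KKT with SCC and SOSC) at the point `u`
for the problem: minimize `F` subject to `ge j = 0` (`j ∈ Es`), `gi j ≥ 0` (`j ∈ Is`). -/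
def OptCondsAt {n : ℕ} {ι κ : Type}
    (Es : Finset ι) (ge : ι → RPoly n) (Is : Finset κ) (gi : κ → RPoly n)
    (F : RPoly n) (u : Fin n → ℝ) : Prop :=
  -- LICQC: gradients of active constraints are linearly independent
  LinearIndependent ℝ
    (Sum.elim
      (fun j : {j : ι // j ∈ Es ∧ eval u (ge j) = 0} => gradP (ge j.1) u)
      (fun j : {j : κ // j ∈ Is ∧ eval u (gi j) = 0} => gradP (gi j.1) u)) ∧
  ∃ (lamE : ι → ℝ) (lamI : κ → ℝ),
    -- KKT stationarity
    (gradP F u =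
      (∑ j ∈ Es, lamE j • gradP (ge j) u) + ∑ j ∈ Is, lamI j • gradP (gi j) u) ∧
    (∀ j ∈ Is, 0 ≤ lamI j ∧ lamI j * eval u (gi j) = 0) ∧
    -- SCC
    (∀ j ∈ Is, 0 < lamI j + eval u (gi j)) ∧
    -- SOSC
    (∀ v : Fin n → ℝ, v ≠ 0 →
      (∀ j ∈ Es, (∑ i, v i * gradP (ge j) u i) = 0) →
      (∀ j ∈ Is, eval u (gi j) = 0 → (∑ i, v i * gradP (gi j) u i) = 0) →
      0 < ∑ i, ∑ i', v i *
        ((hessP F u i i' - ∑ j ∈ Es, lamE j * hessP (ge j) u i i')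
          - ∑ j ∈ Is, lamI j * hessP (gi j) u i i') * v i')

/-- The degree-`ℓ` homogenization `x_0^ℓ p(x/x_0)` of `p`; the new variable `x_0`
is the variable of index `0` in `Fin (n+1)`. -/
def homogAux {n : ℕ} (ℓ : ℕ) (p : RPoly n) : RPoly (n + 1) :=
  ∑ α ∈ p.support,
    monomial
      (Finsupp.single (0 : Fin (n + 1)) (ℓ - mdeg α) + Finsupp.mapDomain Fin.succ α)
      (p.coeff α)

/-- The homogenization `p̃` of `p`. -/
def homogenize {n : ℕ} (p : RPoly n) : RPoly (n + 1) := homogAux p.totalDegree p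

/-- The polynomial `‖x̃‖² - 1`. -/
def sphereP (n : ℕ) : RPoly (n + 1) := (∑ i, (X i : RPoly (n + 1)) ^ 2) - 1

/-- The homogenization `K̃` of the set `K`. -/
def Khom {n : ℕ} (E I : Finset ℕ) (c : ℕ → RPoly n) : Set (Fin (n + 1) → ℝ) :=
  {x | (∀ j ∈ E, eval x (homogenize (c j)) = 0) ∧
       (∀ j ∈ I, 0 ≤ eval x (homogenize (c j))) ∧
       (∑ i, (x i) ^ 2) = 1 ∧ 0 ≤ x 0}

/-- `K` is closed at infinity. -/
def ClosedAtInfinity {n : ℕ} (E I : Finset ℕ) (c : ℕ → RPoly n) : Prop :=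
  Khom E I c = closure (Khom E I c ∩ {x | 0 < x 0})

/-- The tuple `c̃_eq`: the homogenizations `c̃_j` together with `‖x̃‖² - 1`
(the latter indexed by `none`). -/
def gEqH {n : ℕ} (c : ℕ → RPoly n) : Option ℕ → RPoly (n + 1) :=
  fun o => o.elim (sphereP n) (fun j => homogenize (c j))

/-- The tuple `c̃_in`: the homogenizations `c̃_j` together with `x_0`
(the latter indexed by `none`). -/
def gInH {n : ℕ} (c : ℕ → RPoly n) : Option ℕ → RPoly (n + 1) :=
  fun o => o.elim (X 0) (fun j => homogenize (c j))

/-- The index set of a tuple extended by one extra entry (indexed by `none`). -/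
def OS (S : Finset ℕ) : Finset (Option ℕ) := insert none (S.image some)

/-- Feasibility of `θ` for the linear conic problem (P). -/
def PFeas {n m : ℕ} (m1 d : ℕ) (f : RPoly n) (a : Fin m → RPoly n)
    (K : Set (Fin n → ℝ)) (θ : Fin m → ℝ) : Prop :=
  (∀ i : Fin m, m1 ≤ (i : ℕ) → 0 ≤ θ i) ∧ (f - ∑ i, C (θ i) * a i) ∈ PdCone d K

/-- The optimal value `ϑ*` of the linear conic problem (P). -/
def PVal {n m : ℕ} (m1 d : ℕ) (f : RPoly n) (a : Fin m → RPoly n) (b : Fin m → ℝ)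
    (K : Set (Fin n → ℝ)) : ℝ :=
  sSup {v : ℝ | ∃ θ : Fin m → ℝ, PFeas m1 d f a K θ ∧ v = ∑ i, b i * θ i}

/-- Feasibility of `y` for the generalized moment problem (M). -/
def MFeas {n m : ℕ} (m1 d : ℕ) (a : Fin m → RPoly n) (b : Fin m → ℝ)
    (K : Set (Fin n → ℝ)) (y : (Fin n →₀ ℕ) → ℝ) : Prop :=
  InMomentCone d K y ∧
  (∀ i : Fin m, (i : ℕ) < m1 → pairing (a i) y = b i) ∧
  (∀ i : Fin m, m1 ≤ (i : ℕ) → b i ≤ pairing (a i) y)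

/-- The optimal value `φ*` of the generalized moment problem (M). -/
def MVal {n m : ℕ} (m1 d : ℕ) (f : RPoly n) (a : Fin m → RPoly n) (b : Fin m → ℝ)
    (K : Set (Fin n → ℝ)) : ℝ :=
  sInf {v : ℝ | ∃ y : (Fin n →₀ ℕ) → ℝ, MFeas m1 d a b K y ∧ v = pairing f y}

/-- The optimal value `ϑ_k` of the `k`th SOS relaxation of (P). -/
def SOSRelaxVal {n m : ℕ} {ι κ : Type} (m1 : ℕ) (f : RPoly n) (a : Fin m → RPoly n)
    (b : Fin m → ℝ) (Es : Finset ι) (ge : ι → RPoly n) (Is : Finset κ) (gi : κ → RPoly n)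
    (k : ℕ) : ℝ :=
  sSup {v : ℝ | ∃ θ : Fin m → ℝ, (∀ i : Fin m, m1 ≤ (i : ℕ) → 0 ≤ θ i) ∧
      (∃ p1 ∈ IdealDeg Es ge (2 * k), ∃ p2 ∈ QModDeg Is gi (2 * k),
        f - ∑ i, C (θ i) * a i = p1 + p2) ∧
      v = ∑ i, b i * θ i}

/-- The semidefinite constraints of the `k`th moment relaxation:
the localizing vectors of the equality constraints vanish, and the localizing
matrices of the inequality constraints and the moment matrix are positive
semidefinite (stated equivalently via the associated quadratic forms). -/
def MomRelaxPSD {n : ℕ} {ι κ : Type} (Es : Finset ι) (ge : ι → RPoly n)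
    (Is : Finset κ) (gi : κ → RPoly n) (k : ℕ) (w : (Fin n →₀ ℕ) → ℝ) : Prop :=
  (∀ j ∈ Es, ∀ p : RPoly n, p.totalDegree + (ge j).totalDegree ≤ 2 * k →
      pairing (ge j * p) w = 0) ∧
  (∀ j ∈ Is, ∀ p : RPoly n, p.totalDegree + ((gi j).totalDegree + 1) / 2 ≤ k →
      0 ≤ pairing (gi j * p ^ 2) w) ∧
  (∀ p : RPoly n, p.totalDegree ≤ k → 0 ≤ pairing (p ^ 2) w)

/-- Feasibility of `w` for the `k`th moment relaxation of (M). -/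
def GMomFeas {n m : ℕ} {ι κ : Type} (m1 : ℕ) (a : Fin m → RPoly n) (b : Fin m → ℝ)
    (Es : Finset ι) (ge : ι → RPoly n) (Is : Finset κ) (gi : κ → RPoly n) (k : ℕ)
    (w : (Fin n →₀ ℕ) → ℝ) : Prop :=
  (∀ i : Fin m, (i : ℕ) < m1 → pairing (a i) w = b i) ∧
  (∀ i : Fin m, m1 ≤ (i : ℕ) → b i ≤ pairing (a i) w) ∧
  MomRelaxPSD Es ge Is gi k w

/-- The optimal value `φ_k` of the `k`th moment relaxation of (M). -/
def GMomVal {n m : ℕ} {ι κ : Type} (m1 : ℕ) (f : RPoly n) (a : Fin m → RPoly n)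
    (b : Fin m → ℝ) (Es : Finset ι) (ge : ι → RPoly n) (Is : Finset κ) (gi : κ → RPoly n)
    (k : ℕ) : ℝ :=
  sInf {v : ℝ | ∃ w : (Fin n →₀ ℕ) → ℝ,
      GMomFeas m1 a b Es ge Is gi k w ∧ v = pairing f w}

/-- The optimal value `f_k^den` of the `k`th order relaxation with denominators. -/
def DenRelaxVal {n : ℕ} (E I : Finset ℕ) (c : ℕ → RPoly n) (f : RPoly n) (d k : ℕ) : ℝ :=
  sSup {γ : ℝ | ∃ p1 ∈ IdealDeg E c (2 * k + d), ∃ p2 ∈ QModDeg I c (2 * k + d),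
      (1 + ∑ i, (X i : RPoly n) ^ 2) ^ k * (f - C γ) = p1 + p2}


/-- The degree bound `d_K = max_j ⌈deg(c_j)/2⌉`. -/
def dKOrig {n : ℕ} (E I : Finset ℕ) (c : ℕ → RPoly n) : ℕ :=
  (E ∪ I).sup fun j => ((c j).totalDegree + 1) / 2

/-- The degree bound `d_0` for the GMP relaxations. -/
def d0GMP {n m : ℕ} (f : RPoly n) (a : Fin m → RPoly n) (E I : Finset ℕ)
    (c : ℕ → RPoly n) : ℕ :=
  max ((f.totalDegree + 1) / 2)
    (max (dKOrig E I c) (Finset.univ.sup fun i : Fin m => ((a i).totalDegree + 1) / 2))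

/-- The degree bound `d̃_K` for the homogenized constraining tuples. -/
def dKHom {n : ℕ} (E I : Finset ℕ) (c : ℕ → RPoly n) : ℕ :=
  max ((OS E).sup fun o => ((gEqH c o).totalDegree + 1) / 2)
      ((OS I).sup fun o => ((gInH c o).totalDegree + 1) / 2)

end
lemma s12_sos_add {n : ℕ} {a b : RPoly n} (ha : IsSOS a) (hb : IsSOS b) : IsSOS (a + b) := by
  obtain ⟨L, rfl⟩ := ha
  obtain ⟨M, rfl⟩ := hb
  exact ⟨L ++ M, by simp⟩

lemma s12_sos_sq {n : ℕ} (q : RPoly n) : IsSOS (q ^ 2) := ⟨[q], by simp⟩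

lemma s12_sos_mul {n : ℕ} (q : RPoly n) {a : RPoly n} (ha : IsSOS a) : IsSOS (q ^ 2 * a) := by
  obtain ⟨L, rfl⟩ := ha
  refine ⟨L.map (fun r => q * r), ?_⟩
  induction L with
  | nil => simp
  | cons x L ih =>
    simp only [List.map_cons, List.sum_cons, mul_add] at ih ⊢
    rw [ih, mul_pow]

lemma s12_key {n : ℕ} (h : RPoly n) (m : ℕ) : ∀ ε : ℝ, 0 < ε →
    ∃ B : ℝ, IsSOS (h + C ε + C B ^ 2 * h ^ (2 ^ (m + 1))) := by
  induction m with
  | zero =>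
    intro ε hε
    have hs : √ε ≠ 0 := (Real.sqrt_pos.2 hε).ne'
    refine ⟨1 / (2 * √ε), ?_⟩
    have e : h + C ε + C (1 / (2 * √ε)) ^ 2 * h ^ (2 ^ (0 + 1))
        = (C (√ε) + C (1 / (2 * √ε)) * h) ^ 2 := by
      have h1 : (C ε : RPoly n) = C (√ε) ^ 2 := by
        rw [← C_pow, Real.sq_sqrt hε.le]
      have h2 : (2 : RPoly n) * C (√ε) * C (1 / (2 * √ε)) = 1 := by
        rw [show (2 : RPoly n) = C (2 : ℝ) from (map_ofNat C 2).symm, ← C_mul, ← C_mul, ← C_1]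
        congr 1
        field_simp
      rw [h1]
      linear_combination (-h) * h2
    rw [e]
    exact s12_sos_sq _
  | succ m ih =>
    intro ε hε
    obtain ⟨B, hB⟩ := ih (ε / 2) (half_pos hε)
    have hε2 := half_pos hε
    have hs : √(ε / 2) ≠ 0 := (Real.sqrt_pos.2 hε2).ne'
    refine ⟨B ^ 2 / (2 * √(ε / 2)), ?_⟩
    have e : h + C ε + C (B ^ 2 / (2 * √(ε / 2))) ^ 2 * h ^ (2 ^ (m + 1 + 1))
        = (h + C (ε / 2) + C B ^ 2 * h ^ (2 ^ (m + 1))) +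
          (C (√(ε / 2)) - C (B ^ 2 / (2 * √(ε / 2))) * h ^ (2 ^ (m + 1))) ^ 2 := by
      have h0 : (C ε : RPoly n) = C (ε / 2) + C (ε / 2) := by
        rw [← C_add, add_halves]
      have h1 : (C (ε / 2) : RPoly n) = C (√(ε / 2)) ^ 2 := by
        rw [← C_pow, Real.sq_sqrt hε2.le]
      have h2 : (2 : RPoly n) * C (√(ε / 2)) * C (B ^ 2 / (2 * √(ε / 2))) = C B ^ 2 := by
        rw [show (2 : RPoly n) = C (2 : ℝ) from (map_ofNat C 2).symm, ← C_mul, ← C_mul, ← C_pow]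
        congr 1
        field_simp
      rw [h0, pow_succ 2 (m + 1), pow_mul]
      linear_combination h1 + h ^ (2 ^ (m + 1)) * h2
    rw [e]
    exact s12_sos_add hB (s12_sos_sq _)

lemma s12_deg {n : ℕ} (B : ℝ) (q : RPoly n) : (C B * q).totalDegree ≤ q.totalDegree := by
  rw [← smul_eq_C_mul]
  exact totalDegree_smul_le _ _

lemma s12_span {n : ℕ} (E : Finset ℕ) (c : ℕ → RPoly n) (f : RPoly n)
    (hf : f ∈ IdealFull E c) : ∃ q : ℕ → RPoly n, f = ∑ j ∈ E, c j * q j := by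
  have hf' : f ∈ Submodule.span (RPoly n) (c '' (E : Set ℕ)) := hf
  rw [Submodule.mem_span_image_finset_iff_exists_fun'] at hf'
  obtain ⟨q, hq⟩ := hf'
  exact ⟨q, by rw [← hq]; exact Finset.sum_congr rfl fun j _ => by rw [smul_eq_mul, mul_comm]⟩

/-- a uniform degree bound `k0` such that `p + ε` lies in the
truncated sum `Ideal(c_eq)_{2k0} + QM(c_in)_{2k0}` for every `ε > 0`. -/
theorem statement_12
    (n : ℕ) (E I : Finset ℕ) (hEI : Disjoint E I) (c : ℕ → RPoly n)
    (p σ0 : RPoly n) (hσ0 : σ0 ∈ QModFull I c)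
    (h : RPoly n) (hh : h = p - σ0)
    (k1 : ℕ) (hk1 : 1 ≤ k1) (σ1 : RPoly n) (hσ1 : IsSOS σ1)
    (hmem : h ^ (2 * k1) + σ1 ∈ IdealFull E c) :
    ∃ k0 : ℕ, ∀ ε : ℝ, 0 < ε →
      ∃ p1 ∈ IdealDeg E c (2 * k0), ∃ p2 ∈ QModDeg I c (2 * k0),
        p + C ε = p1 + p2 := by
  obtain ⟨τ0, τ, hτ0, hτ, hσ⟩ := hσ0
  obtain ⟨j, hj⟩ : ∃ j, 2 ^ k1 = k1 + j :=
    ⟨2 ^ k1 - k1, by have := (Nat.lt_two_pow_self (n := k1)); omega⟩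
  have hN : 2 ^ (k1 + 1) = 2 * k1 + 2 * j := by rw [pow_succ, hj]; ring
  have hQ : h ^ (2 * j) * (h ^ (2 * k1) + σ1) ∈ IdealFull E c :=
    Ideal.mul_mem_left _ _ hmem
  obtain ⟨q, hq⟩ := s12_span E c _ hQ
  set Dh := h.totalDegree
  set DN := (h ^ (2 ^ (k1 + 1))).totalDegree
  set DS := ((h ^ j) ^ 2 * σ1).totalDegree
  set SE := ∑ i ∈ E, ((q i).totalDegree + (c i).totalDegree)
  set SI := ∑ i ∈ I, ((τ i).totalDegree + (c i).totalDegree)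
  refine ⟨τ0.totalDegree + Dh + DN + DS + SE + SI, ?_⟩
  intro ε hε
  obtain ⟨B, hB⟩ := s12_key h k1 ε hε
  refine ⟨∑ i ∈ E, c i * (C (-B ^ 2) * q i), ⟨_, ?_, rfl⟩,
    (τ0 + (h + C ε + C B ^ 2 * h ^ (2 ^ (k1 + 1))) + C B ^ 2 * ((h ^ j) ^ 2 * σ1))
      + ∑ i ∈ I, c i * τ i, ⟨_, τ, ?_, ?_, ?_, rfl⟩, ?_⟩
  · intro i hi
    have h1 := s12_deg (-B ^ 2) (q i)
    have h2 : (q i).totalDegree + (c i).totalDegree ≤ SE :=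
      Finset.single_le_sum (f := fun i => (q i).totalDegree + (c i).totalDegree)
        (fun _ _ => Nat.zero_le _) hi
    omega
  · exact s12_sos_add (s12_sos_add hτ0 hB) (s12_sos_mul _ (s12_sos_mul _ hσ1))
  · have a1 : (C ε : RPoly n).totalDegree = 0 := totalDegree_C ε
    have a2 := s12_deg (B ^ 2) (h ^ (2 ^ (k1 + 1)))
    have a3 := s12_deg (B ^ 2) ((h ^ j) ^ 2 * σ1)
    rw [C_pow] at a2 a3
    refine (totalDegree_add _ _).trans (max_le ((totalDegree_add _ _).trans (max_le ?_
      ((totalDegree_add _ _).trans (max_le ((totalDegree_add _ _).trans (max_le ?_ ?_)) ?_)))) ?_)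
    all_goals omega
  · intro i hi
    refine ⟨hτ i hi, ?_⟩
    have h2 : (τ i).totalDegree + (c i).totalDegree ≤ SI :=
      Finset.single_le_sum (f := fun i => (τ i).totalDegree + (c i).totalDegree)
        (fun _ _ => Nat.zero_le _) hi
    omega
  · have e1 : ∑ i ∈ E, c i * (C (-B ^ 2) * q i)
        = - (C B ^ 2) * (h ^ (2 * j) * (h ^ (2 * k1) + σ1)) := by
      rw [hq, Finset.mul_sum]
      refine Finset.sum_congr rfl fun i _ => ?_
      rw [C_neg, C_pow]
      ring
    have e2 : p = h + (τ0 + ∑ i ∈ I, c i * τ i) := by rw [hh, ← hσ]; ring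
    rw [e1, e2, hN]
    ring
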